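/- arXiv:2303.13604 — 6 statements merged into one kernel-verified Lean document; each statement's English description precedes it below -/
import Mathlib

section
/- Let (δ_i)_{i∈I} be a family of probability distributions on the nonnegative integers. Then this family is tight if and only if it admits an upper tail bound, i.e., a probability distribution δ on the nonnegative integers such that δ_i({x ≥ j}) ≤ δ({x ≥ j}) for all i ∈ I and all j ≥ 0. -/
/-- The tail probability `p({x ≥ s})` of a distribution `p` on the nonnegative integers. -/
noncomputable def tailProb (p : ℕ → ℝ) (s : ℕ) : ℝ :=
  ∑' x : ℕ, if s ≤ x then p x else 0

theorem tailProb_eq (p : ℕ → ℝ) (h : HasSum p 1) (s : ℕ) :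
    tailProb p s = 1 - ∑ x ∈ Finset.range s, p x := by
  have h1 : HasSum (fun x => if x ∈ Finset.range s then p x else 0)
      (∑ x ∈ Finset.range s, p x) := by
    have := hasSum_sum_of_ne_finset_zero (L := SummationFilter.unconditional ℕ) (s := Finset.range s)
      (f := fun x => if x ∈ Finset.range s then p x else 0)
      (by intro b hb; simp only [if_neg hb])
    rwa [Finset.sum_congr rfl (fun x hx => if_pos hx)] at this
  have h2 := h.sub h1
  unfold tailProb
  rw [← h2.tsum_eq]
  congr 1
  funext x
  by_cases hx : s ≤ x
  · simp [hx, not_lt.mpr hx]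
  · simp [hx, not_le.mp hx]

theorem tailProb_antitone (p : ℕ → ℝ) (hp : ∀ x, 0 ≤ p x) (h : HasSum p 1) :
    Antitone (tailProb p) := by
  refine antitone_nat_of_succ_le fun n => ?_
  rw [tailProb_eq p h, tailProb_eq p h, Finset.sum_range_succ]
  linarith [hp n]

theorem tailProb_nonneg (p : ℕ → ℝ) (hp : ∀ x, 0 ≤ p x) (s : ℕ) : 0 ≤ tailProb p s := by
  unfold tailProb
  refine tsum_nonneg fun x => ?_
  split_ifs
  · exact hp x
  · exact le_rfl

theorem tailProb_tendsto (p : ℕ → ℝ) (h : HasSum p 1) :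
    Filter.Tendsto (tailProb p) Filter.atTop (nhds 0) := by
  have := h.tendsto_sum_nat.const_sub 1
  rw [sub_self] at this
  exact this.congr fun n => (tailProb_eq p h n).symm

/-- A family of probability distributions on ℕ is tight iff it admits an upper tail bound. -/
theorem tight_iff_exists_upperTailBound {I : Type*} (δ : I → ℕ → ℝ)
    (hnn : ∀ i x, 0 ≤ δ i x) (hsum : ∀ i, HasSum (δ i) 1) :
    (∀ ε : ℝ, 0 < ε → ∃ j : ℕ, ∀ i, tailProb (δ i) j ≤ ε) ↔
      (∃ d : ℕ → ℝ, (∀ x, 0 ≤ d x) ∧ HasSum d 1 ∧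
        ∀ i, ∀ j : ℕ, tailProb (δ i) j ≤ tailProb d j) := by
  constructor
  · intro ht
    rcases isEmpty_or_nonempty I with hI | hI
    · refine ⟨fun x => if x = 0 then 1 else 0, fun x => ?_, hasSum_ite_eq 0 1,
        fun i => isEmptyElim i⟩
      dsimp only
      split_ifs <;> norm_num
    have h0 : ∀ i, tailProb (δ i) 0 = 1 := fun i => by simp [tailProb_eq _ (hsum i)]
    have hanti := fun i => tailProb_antitone (δ i) (hnn i) (hsum i)
    have hbdd : ∀ s, BddAbove (Set.range fun i => tailProb (δ i) s) := by
      intro s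
      refine ⟨1, ?_⟩
      rintro _ ⟨i, rfl⟩
      exact (hanti i (Nat.zero_le s)).trans_eq (h0 i)
    obtain ⟨G, hG⟩ : ∃ G : ℕ → ℝ, ∀ s, G s = ⨆ i, tailProb (δ i) s := ⟨_, fun _ => rfl⟩
    have hle : ∀ i s, tailProb (δ i) s ≤ G s := fun i s => by
      rw [hG]; exact le_ciSup (hbdd s) i
    have hG0 : G 0 = 1 := by rw [hG]; simp [h0]
    have hGanti : Antitone G := by
      intro a b hab
      rw [hG b]
      exact ciSup_le fun i => (hanti i hab).trans (hle i a)
    have hGnn : ∀ s, 0 ≤ G s := fun s =>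
      (tailProb_nonneg _ (hnn hI.some) s).trans (hle hI.some s)
    have hGlim : Filter.Tendsto G Filter.atTop (nhds 0) := by
      rw [Metric.tendsto_atTop]
      intro ε hε
      obtain ⟨j, hj⟩ := ht (ε / 2) (by positivity)
      refine ⟨j, fun n hn => ?_⟩
      have h1 : G j ≤ ε / 2 := by rw [hG]; exact ciSup_le hj
      have h2 := hGanti hn
      rw [Real.dist_eq, sub_zero, abs_of_nonneg (hGnn n)]
      linarith
    have hd : ∀ x, 0 ≤ G x - G (x + 1) := fun x => sub_nonneg.2 (hGanti (Nat.le_succ x))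
    have hds : HasSum (fun x => G x - G (x + 1)) 1 := by
      rw [hasSum_iff_tendsto_nat_of_nonneg hd]
      simp only [Finset.sum_range_sub', hG0]
      simpa using hGlim.const_sub 1
    refine ⟨fun x => G x - G (x + 1), hd, hds, fun i j => ?_⟩
    rw [tailProb_eq _ hds, Finset.sum_range_sub', hG0]
    linarith [hle i j]
  · rintro ⟨d, -, hd, hb⟩ ε hε
    obtain ⟨j, hj⟩ := ((tailProb_tendsto d hd).eventually (gt_mem_nhds hε)).exists
    exact ⟨j, fun i => (hb i j).trans hj.le⟩
end

section
/- Let (δ_i)_{i∈I} be a nonempty tight family of probability distributions on the nonnegative integers, and let δ be the probability distribution defined by δ(j) := sup_{i∈I} δ_i({x ≥ j}) − sup_{i∈I} δ_i({x ≥ j+1}). Then for every nonnegative integer a, δ({x ≥ a}) = sup_{i∈I} δ_i({x ≥ a}); in particular δ_i({x ≥ a}) ≤ δ({x ≥ a}) for all i ∈ I and all a, so δ is an upper tail bound for the family. -/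
/-- For a nonempty tight family of probability distributions on ℕ, the distribution
`δ(j) := sup_i δ_i({x ≥ j}) − sup_i δ_i({x ≥ j+1})` satisfies
`δ({x ≥ a}) = sup_i δ_i({x ≥ a})` for every `a`; in particular
`δ_i({x ≥ a}) ≤ δ({x ≥ a})` for all `i` and `a`, i.e. `δ` is an upper tail bound. -/
theorem upperTailBound_tail_eq_sup {I : Type*} [Nonempty I] (δ : I → ℕ → ℝ)
    (hnn : ∀ i x, 0 ≤ δ i x) (hsum : ∀ i, HasSum (δ i) 1)
    (htight : ∀ ε : ℝ, 0 < ε → ∃ j : ℕ, ∀ i, tailProb (δ i) j ≤ ε) :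
    (∀ a : ℕ,
        tailProb (fun j : ℕ => (⨆ i, tailProb (δ i) j) - (⨆ i, tailProb (δ i) (j + 1))) a
          = ⨆ i, tailProb (δ i) a) ∧
      (∀ i, ∀ a : ℕ,
        tailProb (δ i) a
          ≤ tailProb (fun j : ℕ => (⨆ i, tailProb (δ i) j) - (⨆ i, tailProb (δ i) (j + 1))) a) := by
  have hsm : ∀ i (s : ℕ), Summable (fun x : ℕ => if s ≤ x then δ i x else 0) := by
    intro i s
    refine Summable.of_nonneg_of_le (fun x => ?_) (fun x => ?_) (hsum i).summable
    · split_ifs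
      · exact hnn i x
      · exact le_rfl
    · split_ifs
      · exact le_rfl
      · exact hnn i x
  have h0 : ∀ i s, 0 ≤ tailProb (δ i) s := by
    intro i s
    refine tsum_nonneg (fun x => ?_)
    split_ifs
    · exact hnn i x
    · exact le_rfl
  have hanti : ∀ i s t, s ≤ t → tailProb (δ i) t ≤ tailProb (δ i) s := by
    intro i s t hst
    refine (hsm i t).tsum_le_tsum (fun x => ?_) (hsm i s)
    by_cases h : t ≤ x
    · simp [h, hst.trans h]
    · simp only [h, if_false]
      split_ifs
      · exact hnn i x
      · exact le_rfl
  have h1 : ∀ i s, tailProb (δ i) s ≤ 1 := by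
    intro i s
    refine (hanti i 0 s (Nat.zero_le s)).trans ?_
    simp [tailProb, (hsum i).tsum_eq]
  have hbdd : ∀ s, BddAbove (Set.range fun i => tailProb (δ i) s) := by
    intro s
    refine ⟨1, ?_⟩
    rintro _ ⟨i, rfl⟩
    exact h1 i s
  have key : ∀ a : ℕ,
      tailProb (fun j : ℕ => (⨆ i, tailProb (δ i) j) - (⨆ i, tailProb (δ i) (j + 1))) a
        = ⨆ i, tailProb (δ i) a := by
    intro a
    obtain ⟨S, hS⟩ : ∃ S : ℕ → ℝ, ∀ j, S j = ⨆ i, tailProb (δ i) j := ⟨_, fun _ => rfl⟩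
    simp only [← hS]
    have S0 : ∀ j, 0 ≤ S j := fun j => by
      rw [hS]; exact Real.iSup_nonneg (fun i => h0 i j)
    have Santi : Antitone S := by
      intro s t hst
      rw [hS, hS]
      exact ciSup_mono (hbdd s) (fun i => hanti i s t hst)
    have Slim : Filter.Tendsto S Filter.atTop (nhds 0) := by
      rw [Metric.tendsto_atTop]
      intro ε hε
      obtain ⟨j, hj⟩ := htight (ε / 2) (by linarith)
      refine ⟨j, fun n hn => ?_⟩
      rw [Real.dist_eq, sub_zero, abs_of_nonneg (S0 n)]
      have : S j ≤ ε / 2 := by rw [hS]; exact ciSup_le hj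
      have := Santi hn
      linarith
    have hsumS : HasSum (fun x : ℕ => if a ≤ x then S x - S (x + 1) else 0) (S a) := by
      rw [hasSum_iff_tendsto_nat_of_nonneg]
      · have hp : ∀ n, ∑ x ∈ Finset.range n, (if a ≤ x then S x - S (x + 1) else 0)
            = S a - S (max n a) := by
          intro n
          induction n with
          | zero => simp
          | succ n ih =>
            rw [Finset.sum_range_succ, ih]
            by_cases h : a ≤ n
            · rw [if_pos h, max_eq_left h, max_eq_left (by omega : a ≤ n + 1)]; ring
            · rw [if_neg h, max_eq_right (by omega : n ≤ a),
                max_eq_right (by omega : n + 1 ≤ a)]; ring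
        simp only [hp]
        have hm : Filter.Tendsto (fun n : ℕ => max n a) Filter.atTop Filter.atTop :=
          Filter.tendsto_atTop_mono (fun n => le_max_left n a) Filter.tendsto_id
        simpa using (Slim.comp hm).const_sub (S a)
      · intro x
        split_ifs
        · exact sub_nonneg.2 (Santi (Nat.le_succ x))
        · exact le_rfl
    exact hsumS.tsum_eq
  refine ⟨key, fun i a => ?_⟩
  rw [key a]
  exact le_ciSup (hbdd a) i
end

section
/- Let Ω be a finite set, f : 2^Ω → ℝ a monotone submodular set function, k ≥ 1 an integer, and S* ⊆ Ω with |S*| ≤ k. Let S ⊊ Ω, let ε ≥ 0, and let x̄ : Ω \ S → ℝ satisfy |x̄(a) − f(S ∪ {a})| ≤ ε for every a ∈ Ω \ S. If a₁ ∈ Ω \ S maximizes x̄ over Ω \ S, then f(S ∪ {a₁}) − f(S) ≥ (1/k)·( f(S*) − f(S) ) − 2ε. -/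
open Finset

/-- The per-phase greedy step with an `ε`-accurate oracle: if `a₁` maximizes the
approximate marginal values `x̄` over `Ω \ S`, then
`f(S ∪ {a₁}) − f(S) ≥ (1/k)(f(S*) − f(S)) − 2ε`. -/
theorem greedy_step_robust {Ω : Type*} [Fintype Ω] [DecidableEq Ω]
    (f : Finset Ω → ℝ)
    (hsub : ∀ A B : Finset Ω, A ⊆ B → ∀ x : Ω, x ∉ B →
      f (insert x B) - f B ≤ f (insert x A) - f A)
    (hmono : ∀ C D : Finset Ω, C ⊆ D → f C ≤ f D)
    (k : ℕ) (hk : 1 ≤ k)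
    (Sstar : Finset Ω) (hSstar : Sstar.card ≤ k)
    (S : Finset Ω) (hS : S ≠ Finset.univ)
    (ε : ℝ) (hε : 0 ≤ ε)
    (xbar : Ω → ℝ) (hxbar : ∀ a : Ω, a ∉ S → |xbar a - f (insert a S)| ≤ ε)
    (a₁ : Ω) (ha₁ : a₁ ∉ S) (hmax : ∀ a : Ω, a ∉ S → xbar a ≤ xbar a₁) :
    f (insert a₁ S) - f S ≥ (1 / (k : ℝ)) * (f Sstar - f S) - 2 * ε := by
  have hM : 0 ≤ f (insert a₁ S) - f S + 2 * ε := by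
    have := hmono S (insert a₁ S) (Finset.subset_insert _ _)
    linarith
  have key : ∀ a : Ω, a ∉ S → f (insert a S) - f S ≤ f (insert a₁ S) - f S + 2 * ε := by
    intro a ha
    have h1 := abs_le.mp (hxbar a ha)
    have h2 := abs_le.mp (hxbar a₁ ha₁)
    have h3 := hmax a ha
    linarith [h1.1, h2.2]
  have hind : ∀ T : Finset Ω,
      f (S ∪ T) - f S ≤ (T.card : ℝ) * (f (insert a₁ S) - f S + 2 * ε) := by
    intro T
    induction T using Finset.induction_on with
    | empty => simp
    | insert x T hx ih =>
      rw [Finset.card_insert_of_notMem hx, Finset.union_insert]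
      push_cast
      by_cases hxs : x ∈ S ∪ T
      · rw [Finset.insert_eq_of_mem hxs]
        linarith
      · have h1 := hsub S (S ∪ T) Finset.subset_union_left x hxs
        have h2 := key x (fun h => hxs (Finset.mem_union_left _ h))
        linarith
  have h1 := hind Sstar
  have h2 := hmono Sstar (S ∪ Sstar) Finset.subset_union_right
  have hkpos : (0 : ℝ) < k := by exact_mod_cast hk
  have hc : (Sstar.card : ℝ) ≤ k := by exact_mod_cast hSstar
  have h3 := mul_le_mul_of_nonneg_right hc hM
  have h4 : (1 / (k : ℝ)) * (f Sstar - f S) ≤ f (insert a₁ S) - f S + 2 * ε := by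
    rw [one_div, inv_mul_le_iff₀ hkpos]
    linarith
  linarith
end

section
/- Let k ≥ 1 be an integer, V ≥ 0 and c ≥ 0 real numbers, and let u_0, u_1, …, u_k be real numbers with u_0 ≥ 0 such that for every i ∈ {1, …, k}, u_i ≥ (1/k)·V − c + (1 − 1/k)·u_{i−1}. Then u_k ≥ (1 − 1/e)·V − k·c. -/
/-- The recursive amplification step: if `u_i ≥ (1/k)·V − c + (1 − 1/k)·u_{i−1}` for
`i = 1, …, k`, with `u_0 ≥ 0`, `V ≥ 0` and `c ≥ 0`, then `u_k ≥ (1 − 1/e)·V − k·c`. -/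
theorem greedy_recursion_one_sub_inv_e (k : ℕ) (hk : 1 ≤ k)
    (V c : ℝ) (hV : 0 ≤ V) (hc : 0 ≤ c)
    (u : ℕ → ℝ) (hu0 : 0 ≤ u 0)
    (hrec : ∀ i : ℕ, 1 ≤ i → i ≤ k →
      u i ≥ (1 / (k : ℝ)) * V - c + (1 - 1 / (k : ℝ)) * u (i - 1)) :
    u k ≥ (1 - 1 / Real.exp 1) * V - (k : ℝ) * c := by
  have hk1 : (1 : ℝ) ≤ (k : ℝ) := by exact_mod_cast hk
  have hp0 : 0 ≤ 1 / (k : ℝ) := by positivity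
  have hp1 : 1 / (k : ℝ) ≤ 1 := by
    rw [div_le_one (by linarith)]
    exact hk1
  have hexp : (1 - 1 / (k : ℝ)) ^ k ≤ 1 / Real.exp 1 := by
    have h := Real.one_sub_div_pow_le_exp_neg (n := k) (t := 1) hk1
    rwa [Real.exp_neg, ← one_div] at h
  generalize 1 / (k : ℝ) = p at *
  have key : ∀ i : ℕ, i ≤ k → (1 - (1 - p) ^ i) * V - (i : ℝ) * c ≤ u i := by
    intro i
    induction i with
    | zero => intro _; simpa using hu0
    | succ i ih =>
      intro hi
      have h1 := hrec (i + 1) (by omega) hi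
      have h2 := mul_le_mul_of_nonneg_left (ih (by omega)) (sub_nonneg.mpr hp1)
      have h3 : 0 ≤ p * ((i : ℝ) * c) := by positivity
      rw [Nat.add_sub_cancel] at h1
      push_cast
      rw [pow_succ]
      linarith
  have h1 := key k le_rfl
  have h2 := mul_le_mul_of_nonneg_right hexp hV
  linarith
end

section
/- Let Ω be a finite set with |Ω| ≥ k ≥ 1, let f : 2^Ω → ℝ be a monotone submodular set function with f(∅) ≥ 0, and let ε ≥ 0. Consider the greedy procedure with an ε-accurate oracle: S^(0) = ∅, and for i = 1, …, k, S^(i) = S^(i−1) ∪ {a_i} where a_i maximizes over a ∈ Ω \ S^(i−1) some values x̄_i(a) satisfying |x̄_i(a) − f(S^(i−1) ∪ {a})| ≤ ε. Then f(S^(k)) ≥ (1 − 1/e)·max_{S ⊆ Ω, |S| ≤ k} f(S) − 2k·ε. In other words, the greedy algorithm is (1 − 1/e, 2k)-robust. -/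
open Finset

theorem greedy_aux {Ω : Type*} [DecidableEq Ω] (f : Finset Ω → ℝ)
    (hsub : ∀ A B : Finset Ω, A ⊆ B → ∀ x : Ω, x ∉ B →
      f (insert x B) - f B ≤ f (insert x A) - f A)
    (A : Finset Ω) (c : ℝ) (hc : 0 ≤ c)
    (h : ∀ b, b ∉ A → f (insert b A) - f A ≤ c) (T : Finset Ω) :
    f (A ∪ T) - f A ≤ T.card * c := by
  induction T using Finset.induction_on with
  | empty => simp
  | insert x T hx ih =>
    rw [Finset.card_insert_of_notMem hx, Finset.union_insert]
    push_cast
    by_cases hxA : x ∈ A ∪ T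
    · rw [Finset.insert_eq_of_mem hxA]
      linarith
    · have h1 := hsub A (A ∪ T) Finset.subset_union_left x hxA
      have h2 := h x (fun h' => hxA (Finset.mem_union_left _ h'))
      linarith

/-- The greedy procedure with an `ε`-accurate value oracle is `(1 − 1/e, 2k)`-robust:
if `S⁽⁰⁾ = ∅` and, for `i = 1, …, k`, `S⁽ⁱ⁾ = S⁽ⁱ⁻¹⁾ ∪ {aᵢ}` where `aᵢ` maximizes over
`a ∈ Ω \ S⁽ⁱ⁻¹⁾` values `x̄ᵢ(a)` satisfying `|x̄ᵢ(a) − f(S⁽ⁱ⁻¹⁾ ∪ {a})| ≤ ε`, then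
`f(S⁽ᵏ⁾) ≥ (1 − 1/e)·max_{|T| ≤ k} f(T) − 2kε`. -/
theorem greedy_robust {Ω : Type*} [Fintype Ω] [DecidableEq Ω]
    (k : ℕ) (hk : 1 ≤ k) (hcard : k ≤ Fintype.card Ω)
    (f : Finset Ω → ℝ)
    (hsub : ∀ A B : Finset Ω, A ⊆ B → ∀ x : Ω, x ∉ B →
      f (insert x B) - f B ≤ f (insert x A) - f A)
    (hmono : ∀ C D : Finset Ω, C ⊆ D → f C ≤ f D)
    (hf0 : 0 ≤ f ∅)
    (ε : ℝ) (hε : 0 ≤ ε)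
    (S : ℕ → Finset Ω) (xbar : ℕ → Ω → ℝ) (a : ℕ → Ω)
    (hS0 : S 0 = ∅)
    (hxbar : ∀ i : ℕ, 1 ≤ i → i ≤ k → ∀ b : Ω, b ∉ S (i - 1) →
      |xbar i b - f (insert b (S (i - 1)))| ≤ ε)
    (ha : ∀ i : ℕ, 1 ≤ i → i ≤ k → a i ∉ S (i - 1))
    (hamax : ∀ i : ℕ, 1 ≤ i → i ≤ k → ∀ b : Ω, b ∉ S (i - 1) → xbar i b ≤ xbar i (a i))
    (hSi : ∀ i : ℕ, 1 ≤ i → i ≤ k → S i = insert (a i) (S (i - 1))) :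
    ∀ T : Finset Ω, T.card ≤ k →
      f (S k) ≥ (1 - 1 / Real.exp 1) * f T - 2 * (k : ℝ) * ε := by
  intro T hT
  have hkR : (1 : ℝ) ≤ k := by exact_mod_cast hk
  have hk0 : (0 : ℝ) < k := by linarith
  have hq : 0 ≤ 1 - 1 / (k : ℝ) := by
    rw [sub_nonneg, div_le_one hk0]; exact hkR
  have hq1 : 1 - 1 / (k : ℝ) ≤ 1 := by
    have : 0 < 1 / (k : ℝ) := by positivity
    linarith
  have hTT : (0 : ℝ) ≤ f T := hf0.trans (hmono _ _ (Finset.empty_subset _))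
  have key : ∀ i : ℕ, i ≤ k →
      f T - f (S i) ≤ (1 - 1 / (k : ℝ)) ^ i * f T + 2 * (i : ℝ) * ε := by
    intro i
    induction i with
    | zero => intro _; simp [hS0, hf0]
    | succ i ih =>
      intro hi
      have ih' := ih (by omega)
      have h1 := hxbar (i + 1) (by omega) hi
      have h2 := ha (i + 1) (by omega) hi
      have h3 := hamax (i + 1) (by omega) hi
      have h4 := hSi (i + 1) (by omega) hi
      simp only [Nat.add_sub_cancel] at h1 h2 h3 h4
      have hm : f (S i) ≤ f (S (i + 1)) :=
        hmono _ _ (by rw [h4]; exact Finset.subset_insert _ _)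
      have hc : 0 ≤ f (S (i + 1)) - f (S i) + 2 * ε := by linarith
      have h5 := greedy_aux f hsub (S i) (f (S (i + 1)) - f (S i) + 2 * ε) hc (by
        intro b hb
        have e1 := abs_le.mp (h1 b hb)
        have e2 := abs_le.mp (h1 _ h2)
        have e3 := h3 b hb
        rw [← h4] at e2
        linarith [e1.1, e2.2]) T
      have h6 : f T ≤ f (S i ∪ T) := hmono _ _ Finset.subset_union_right
      have h7 : (T.card : ℝ) * (f (S (i + 1)) - f (S i) + 2 * ε)
          ≤ k * (f (S (i + 1)) - f (S i) + 2 * ε) :=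
        mul_le_mul_of_nonneg_right (by exact_mod_cast hT) hc
      have h8 : (f T - f (S i)) / k ≤ f (S (i + 1)) - f (S i) + 2 * ε := by
        rw [div_le_iff₀ hk0]; linarith
      have h9 : f T - f (S (i + 1)) ≤ (1 - 1 / (k : ℝ)) * (f T - f (S i)) + 2 * ε := by
        have : (1 - 1 / (k : ℝ)) * (f T - f (S i))
          = (f T - f (S i)) - (f T - f (S i)) / k := by ring
        linarith
      have h10 := mul_le_mul_of_nonneg_left ih' hq
      have h11 : (1 - 1 / (k : ℝ)) * (2 * (i : ℝ) * ε) ≤ 1 * (2 * (i : ℝ) * ε) :=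
        mul_le_mul_of_nonneg_right hq1 (by positivity)
      rw [pow_succ]
      push_cast
      linarith
  have hfin := key k le_rfl
  have hexp : (1 - 1 / (k : ℝ)) ^ k ≤ 1 / Real.exp 1 := by
    have := Real.one_sub_div_pow_le_exp_neg (n := k) (t := 1) hkR
    rwa [Real.exp_neg, ← one_div] at this
  have := mul_le_mul_of_nonneg_right hexp hTT
  linarith
end

section
/- Let d ≥ 0 be an integer, let (f_j)_{j≥1} be real numbers in [0,1], and let (δ_j)_{j≥1} be probability distributions on the nonnegative integers satisfying δ_j({x > d}) = 0 for all j. Define the delayed composite observation x_t = Σ_{j=1}^t f_j·δ_j({t − j}) for t ≥ 1. Then for every a ≥ 1 and m ≥ 1, with b = a + m − 1, | Σ_{t=a}^{b} x_t − Σ_{t=a}^{b} f_t | ≤ 2d. -/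
open Finset

theorem delta_zero_of_tail (p : ℕ → ℝ) (hnn : ∀ x, 0 ≤ p x) (hs : HasSum p 1) (d : ℕ)
    (h : tailProb p (d + 1) = 0) (y : ℕ) (hy : d + 1 ≤ y) : p y = 0 := by
  unfold tailProb at h
  have hnn' : ∀ x, 0 ≤ (if d + 1 ≤ x then p x else 0) := by
    intro x
    split_ifs
    · exact hnn x
    · exact le_rfl
  have hsm : Summable (fun x => if d + 1 ≤ x then p x else 0) := by
    refine Summable.of_nonneg_of_le hnn' ?_ hs.summable
    intro x
    split_ifs
    · exact le_rfl
    · exact hnn x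
  have h2 := hsm.le_tsum y (fun j _ => hnn' j)
  rw [h, if_pos hy] at h2
  exact le_antisymm h2 (hnn y)

theorem cumul_identity (f : ℕ → ℝ) (δ : ℕ → ℕ → ℝ) (x : ℕ → ℝ)
    (hx : ∀ t : ℕ, x t = ∑ j ∈ Finset.Icc 1 t, f j * δ j (t - j)) (n : ℕ) :
    ∑ t ∈ Finset.Icc 1 n, x t
      = ∑ j ∈ Finset.Icc 1 n, f j * ∑ s ∈ Finset.range (n - j + 1), δ j s := by
  induction n with
  | zero => simp
  | succ n ih =>
    rw [Finset.sum_Icc_succ_top (by omega), ih, hx, Finset.sum_Icc_succ_top (by omega),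
      Finset.sum_Icc_succ_top (by omega), ← add_assoc, ← Finset.sum_add_distrib]
    congr 1
    · refine Finset.sum_congr rfl fun j hj => ?_
      rw [Finset.mem_Icc] at hj
      rw [show n + 1 - j = n - j + 1 by omega, Finset.sum_range_succ _ (n - j + 1)]
      ring
    · simp

theorem cumul_bound (d : ℕ)
    (f : ℕ → ℝ) (hf : ∀ j, f j ∈ Set.Icc (0 : ℝ) 1)
    (δ : ℕ → ℕ → ℝ) (hnn : ∀ j x, 0 ≤ δ j x) (hsum : ∀ j, HasSum (δ j) 1)
    (hbd : ∀ j, tailProb (δ j) (d + 1) = 0)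
    (x : ℕ → ℝ) (hx : ∀ t : ℕ, x t = ∑ j ∈ Finset.Icc 1 t, f j * δ j (t - j)) (n : ℕ) :
    0 ≤ ∑ t ∈ Finset.Icc 1 n, f t - ∑ t ∈ Finset.Icc 1 n, x t ∧
    ∑ t ∈ Finset.Icc 1 n, f t - ∑ t ∈ Finset.Icc 1 n, x t ≤ d := by
  have hle : ∀ j k, ∑ s ∈ Finset.range k, δ j s ≤ 1 := fun j k =>
    sum_le_hasSum _ (fun i _ => hnn j i) (hsum j)
  have h0 : ∀ j k, 0 ≤ ∑ s ∈ Finset.range k, δ j s := fun j k =>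
    Finset.sum_nonneg fun i _ => hnn j i
  have heq : ∀ j k, d + 1 ≤ k → ∑ s ∈ Finset.range k, δ j s = 1 := by
    intro j k hk
    refine (hasSum_sum_of_ne_finset_zero fun y hy => ?_).unique (hsum j)
    rw [Finset.mem_range] at hy
    exact delta_zero_of_tail (δ j) (hnn j) (hsum j) d (hbd j) y (by omega)
  rw [cumul_identity f δ x hx, ← Finset.sum_sub_distrib]
  constructor
  · refine Finset.sum_nonneg fun j _ => ?_
    nlinarith [(hf j).1, hle j (n - j + 1)]
  · calc _ ≤ ∑ j ∈ Finset.Icc 1 n, (if n < j + d then (1 : ℝ) else 0) := by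
          refine Finset.sum_le_sum fun j hj => ?_
          rw [Finset.mem_Icc] at hj
          split_ifs with h
          · nlinarith [(hf j).1, (hf j).2, h0 j (n - j + 1),
              mul_nonneg (hf j).1 (h0 j (n - j + 1))]
          · rw [heq j _ (by omega)]
            simp
      _ ≤ d := by
          rw [← Finset.sum_filter, Finset.sum_const, nsmul_eq_mul, mul_one]
          have : (Finset.Icc 1 n).filter (fun j => n < j + d) ⊆ Finset.Ico (n + 1 - d) (n + 1) := by
            intro j hj
            simp only [Finset.mem_filter, Finset.mem_Icc, Finset.mem_Ico] at *
            omega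
          have h := Finset.card_le_card this
          rw [Nat.card_Ico] at h
          exact_mod_cast (by omega : _ ≤ d)

theorem window_split (g : ℕ → ℝ) (a b : ℕ) (ha : 1 ≤ a) (hab : a ≤ b) :
    ∑ t ∈ Finset.Icc a b, g t = ∑ t ∈ Finset.Icc 1 b, g t - ∑ t ∈ Finset.Icc 1 (a - 1), g t := by
  have h1 : Finset.Icc a b = Finset.Ico a (b + 1) := by ext; simp only [Finset.mem_Icc, Finset.mem_Ico]; omega
  have h2 : Finset.Icc 1 b = Finset.Ico 1 (b + 1) := by ext; simp only [Finset.mem_Icc, Finset.mem_Ico]; omega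
  have h3 : Finset.Icc 1 (a - 1) = Finset.Ico 1 a := by ext; simp only [Finset.mem_Icc, Finset.mem_Ico]; omega
  rw [h1, h2, h3, ← Finset.sum_Ico_consecutive g ha (by omega : a ≤ b + 1)]
  ring

/-- With delays uniformly bounded by `d`, the total delayed composite observation over any
window of `m` consecutive time steps differs from the total reward by at most `2d`. -/
theorem bounded_delay_window_error (d : ℕ)
    (f : ℕ → ℝ) (hf : ∀ j, f j ∈ Set.Icc (0 : ℝ) 1)
    (δ : ℕ → ℕ → ℝ) (hnn : ∀ j x, 0 ≤ δ j x) (hsum : ∀ j, HasSum (δ j) 1)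
    (hbd : ∀ j, tailProb (δ j) (d + 1) = 0)
    (x : ℕ → ℝ) (hx : ∀ t : ℕ, x t = ∑ j ∈ Finset.Icc 1 t, f j * δ j (t - j))
    (a m : ℕ) (ha : 1 ≤ a) (hm : 1 ≤ m) (b : ℕ) (hb : b = a + m - 1) :
    |∑ t ∈ Finset.Icc a b, x t - ∑ t ∈ Finset.Icc a b, f t| ≤ 2 * (d : ℝ) := by
  rw [window_split x a b ha (by omega), window_split f a b ha (by omega)]
  have h1 := cumul_bound d f hf δ hnn hsum hbd x hx b
  have h2 := cumul_bound d f hf δ hnn hsum hbd x hx (a - 1)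
  have hd : (0 : ℝ) ≤ d := Nat.cast_nonneg d
  rw [abs_le]
  constructor <;> linarith [h1.1, h1.2, h2.1, h2.2]
end
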